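/- Let L be a symmetric positive-definite n×n real matrix with smallest eigenvalue ℓ > 0, let z : ℝ → ℝᵏ be a continuous function satisfying ‖z(t)‖ ≤ c e^{−α t} + r for all t ≥ 0 with c ≥ 0, α > 0, r ≥ 0, let B : ℝ → (n×k real matrices) be continuous with operator norm ‖B(t)‖ ≤ b for all t, let w : ℝ → ℝⁿ be continuous with ‖w(t)‖ ≤ W for all t ≥ 0, and let y : ℝ → ℝⁿ be differentiable with y'(t) = −L y(t) + B(t) z(t) + w(t) for all t ≥ 0. Then y(t) is bounded on [0, ∞) and limsup_{t→∞} ‖y(t)‖ ≤ (b r + W)/ℓ; in particular y converges exponentially to a bounded set. -/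

import Mathlib

open Matrix Filter

open scoped RealInnerProductSpace in
/-- A lower bound on the eigenvalues of a real Hermitian matrix bounds its quadratic form below. -/
theorem Matrix.IsHermitian.mul_norm_sq_le_inner_toEuclideanLin {ι : Type*} [Fintype ι]
    [DecidableEq ι] {A : Matrix ι ι ℝ} (hA : A.IsHermitian) {m : ℝ}
    (hm : ∀ i, m ≤ hA.eigenvalues i) (x : EuclideanSpace ℝ ι) :
    m * ‖x‖ ^ 2 ≤ ⟪x, Matrix.toEuclideanLin A x⟫ := by
  have happ (i : ι) : Matrix.toEuclideanLin A (hA.eigenvectorBasis i) =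
      hA.eigenvalues i • hA.eigenvectorBasis i := by
    rw [Matrix.toLpLin_apply, hA.mulVec_eigenvectorBasis, WithLp.toLp_smul, WithLp.toLp_ofLp]
  rw [← hA.eigenvectorBasis.sum_inner_mul_inner x (Matrix.toEuclideanLin A x),
    ← hA.eigenvectorBasis.sum_sq_norm_inner_right x, Finset.mul_sum]
  refine Finset.sum_le_sum fun i _ => ?_
  rw [← Matrix.isSymmetric_toEuclideanLin_iff.mpr hA, happ, real_inner_smul_left,
    real_inner_comm x, Real.norm_eq_abs, sq_abs]
  nlinarith [mul_le_mul_of_nonneg_right (hm i) (sq_nonneg ⟪x, hA.eigenvectorBasis i⟫)]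

open scoped RealInnerProductSpace in
/-- A curve starting inside a ball of varying positive radius `φ` stays inside it, provided the
radial velocity of the curve is less than `φ'` whenever the curve is on the boundary. -/
theorem norm_le_of_inner_deriv_lt_boundary {E : Type*} [NormedAddCommGroup E]
    [InnerProductSpace ℝ E] {y y' : ℝ → E} {φ φ' : ℝ → ℝ} {a : ℝ}
    (hy : ∀ t, a ≤ t → HasDerivAt y (y' t) t) (hφ : ∀ t, HasDerivAt φ (φ' t) t)
    (hpos : ∀ t, 0 < φ t) (ha : ‖y a‖ ≤ φ a)
    (bound : ∀ t, a ≤ t → ‖y t‖ = φ t → ⟪y t, y' t⟫ < φ t * φ' t) {t : ℝ} (ht : a ≤ t) :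
    ‖y t‖ ≤ φ t := by
  have hsq (s : ℝ) (hs : a ≤ s) := (hy s hs).norm_sq
  have key := image_le_of_deriv_right_lt_deriv_boundary (a := a) (b := t)
    (fun s hs => (hsq s hs.1).continuousAt.continuousWithinAt)
    (fun s hs => (hsq s hs.1).hasDerivWithinAt)
    (by simpa using pow_le_pow_left₀ (norm_nonneg _) ha 2)
    (fun s => (hφ s).pow 2)
    (fun s hs heq => by
      have hnorm : ‖y s‖ = φ s :=
        (pow_left_inj₀ (norm_nonneg _) (hpos s).le two_ne_zero).1 (by simpa using heq)
      have := bound s hs.1 hnorm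
      norm_num
      linarith)
    (Set.right_mem_Icc.2 ht)
  exact (pow_le_pow_iff_left₀ (norm_nonneg _) (hpos t).le two_ne_zero).1 (by simpa using key)

open scoped RealInnerProductSpace in
/-- If the radial velocity of `y` is at most `-ℓ * ‖y‖ + p * exp (-α * t) + q`, then `‖y‖`
converges exponentially to the interval `[0, q / ℓ]`. -/
theorem exists_norm_le_exp_add_of_inner_deriv_le {E : Type*} [NormedAddCommGroup E]
    [InnerProductSpace ℝ E] {y y' : ℝ → E} {ℓ α p q : ℝ} (hℓ : 0 < ℓ) (hα : 0 < α)
    (hp : 0 ≤ p) (hq : 0 ≤ q) (hy : ∀ t, 0 ≤ t → HasDerivAt y (y' t) t)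
    (hbound : ∀ t, 0 ≤ t →
      ⟪y t, y' t⟫ ≤ ‖y t‖ * (-ℓ * ‖y t‖ + (p * Real.exp (-α * t) + q))) :
    ∃ K β : ℝ, 0 < K ∧ 0 < β ∧ ∀ t, 0 ≤ t → ‖y t‖ ≤ K * Real.exp (-β * t) + q / ℓ := by
  obtain ⟨β, hβ, hβα, hβℓ⟩ : ∃ β, 0 < β ∧ β ≤ α ∧ β < ℓ :=
    ⟨min α (ℓ / 2), lt_min hα (half_pos hℓ), min_le_left _ _,
      (min_le_right _ _).trans_lt (half_lt_self hℓ)⟩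
  have hgap : 0 < ℓ - β := sub_pos.2 hβℓ
  have hK : 0 < ‖y 0‖ + p / (ℓ - β) + 1 := by positivity
  have hKp : p < (ℓ - β) * (‖y 0‖ + p / (ℓ - β) + 1) := by
    have : (ℓ - β) * (p / (ℓ - β)) = p := mul_div_cancel₀ _ hgap.ne'
    nlinarith [mul_nonneg hgap.le (norm_nonneg (y 0))]
  have hKy : ‖y 0‖ ≤ ‖y 0‖ + p / (ℓ - β) + 1 := by
    have : 0 ≤ p / (ℓ - β) := by positivity
    linarith
  generalize ‖y 0‖ + p / (ℓ - β) + 1 = K at hK hKp hKy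
  have hR : 0 ≤ q / ℓ := by positivity
  have hpos (t : ℝ) : 0 < K * Real.exp (-β * t) + q / ℓ := by positivity
  have hφ (t : ℝ) : HasDerivAt (fun t => K * Real.exp (-β * t) + q / ℓ)
      (K * (Real.exp (-β * t) * -β)) t := by
    simpa using ((((hasDerivAt_id t).const_mul (-β)).exp).const_mul K).add_const (q / ℓ)
  refine ⟨K, β, hK, hβ, fun t ht =>
    norm_le_of_inner_deriv_lt_boundary hy hφ hpos (by simp; linarith) (fun s hs heq => ?_) ht⟩
  refine (hbound s hs).trans_lt ?_
  rw [heq]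
  refine mul_lt_mul_of_pos_left ?_ (hpos s)
  have hexp : Real.exp (-α * s) ≤ Real.exp (-β * s) :=
    Real.exp_le_exp.2 (by nlinarith)
  have hcancel : ℓ * (q / ℓ) = q := mul_div_cancel₀ _ hℓ.ne'
  nlinarith [mul_le_mul_of_nonneg_left hexp hp,
    mul_lt_mul_of_pos_right hKp (Real.exp_pos (-β * s))]

/-- Cascade estimate used for the paper's Theorem 2: if
`y' = −L y + B(t) z(t) + w(t)` with `L` symmetric positive definite with
smallest eigenvalue `ℓ > 0`, `‖z(t)‖ ≤ c e^{−α t} + r`, `‖B(t)‖ ≤ b`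
(operator norm, `B(t)` viewed as the linear map `ℝᵏ → ℝⁿ` of an `n × k`
matrix) and `‖w(t)‖ ≤ W`, then `y` is bounded on `[0,∞)` and
`limsup_{t→∞} ‖y(t)‖ ≤ (b r + W)/ℓ` (limsup taken in `EReal`). -/
theorem cascade_estimate
    {n k : ℕ} (L : Matrix (Fin n) (Fin n) ℝ)
    (hLsymm : L.IsSymm) (hLpd : L.PosDef)
    (ℓ : ℝ) (hℓ : 0 < ℓ)
    (hmin : IsLeast (Set.range hLpd.isHermitian.eigenvalues) ℓ)
    (z : ℝ → EuclideanSpace ℝ (Fin k)) (hzc : Continuous z)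
    (c α r : ℝ) (hc : 0 ≤ c) (hα : 0 < α) (hr : 0 ≤ r)
    (hz : ∀ t, 0 ≤ t → ‖z t‖ ≤ c * Real.exp (-α * t) + r)
    (B : ℝ → (EuclideanSpace ℝ (Fin k) →L[ℝ] EuclideanSpace ℝ (Fin n)))
    (hBc : Continuous B) (b : ℝ) (hB : ∀ t, ‖B t‖ ≤ b)
    (w : ℝ → EuclideanSpace ℝ (Fin n)) (hwc : Continuous w)
    (W : ℝ) (hW : ∀ t, 0 ≤ t → ‖w t‖ ≤ W)
    (y : ℝ → EuclideanSpace ℝ (Fin n))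
    (hy : ∀ t, 0 ≤ t →
      HasDerivAt y (-(Matrix.toEuclideanLin L (y t)) + B t (z t) + w t) t) :
    (∃ C, ∀ t, 0 ≤ t → ‖y t‖ ≤ C) ∧
      Filter.limsup (fun t => (‖y t‖ : EReal)) Filter.atTop ≤
        (((b * r + W) / ℓ : ℝ) : EReal) := by
  have hb : 0 ≤ b := (norm_nonneg _).trans (hB 0)
  have hW0 : 0 ≤ W := (norm_nonneg _).trans (hW 0 le_rfl)
  obtain ⟨K, β, hK, hβ, hle⟩ := exists_norm_le_exp_add_of_inner_deriv_le (p := b * c)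
    (q := b * r + W) hℓ hα (by positivity) (by positivity) hy (fun t ht => by
      have hL := hLpd.isHermitian.mul_norm_sq_le_inner_toEuclideanLin
        (fun i => hmin.2 (Set.mem_range_self i)) (y t)
      have hBz : ‖B t (z t)‖ ≤ b * (c * Real.exp (-α * t) + r) :=
        (B t).le_of_opNorm_le_of_le (hB t) (hz t ht)
      have h₁ := (real_inner_le_norm (y t) (B t (z t))).trans
        (mul_le_mul_of_nonneg_left hBz (norm_nonneg _))
      have h₂ := (real_inner_le_norm (y t) (w t)).trans
        (mul_le_mul_of_nonneg_left (hW t ht) (norm_nonneg _))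
      rw [inner_add_right, inner_add_right, inner_neg_right]
      linarith)
  refine ⟨⟨K + (b * r + W) / ℓ, fun t ht => (hle t ht).trans ?_⟩, ?_⟩
  · have : Real.exp (-β * t) ≤ 1 := Real.exp_le_one_iff.2 (by nlinarith)
    nlinarith
  · have hlim : Tendsto (fun t => K * Real.exp (-β * t) + (b * r + W) / ℓ) atTop
        (nhds ((b * r + W) / ℓ)) := by
      have hexp : Tendsto (fun t => Real.exp (-β * t)) atTop (nhds 0) :=
        Real.tendsto_exp_atBot.comp (tendsto_id.const_mul_atTop_of_neg (neg_lt_zero.2 hβ))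
      simpa using (hexp.const_mul K).add_const ((b * r + W) / ℓ)
    rw [← ((continuous_coe_real_ereal.tendsto _).comp hlim).limsup_eq]
    refine limsup_le_limsup ?_
    filter_upwards [eventually_ge_atTop 0] with t ht
    exact EReal.coe_le_coe_iff.2 (hle t ht)
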